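/- arXiv:2507.01969 — 2 statements merged into one kernel-verified Lean document; each statement's English description precedes it below -/
import Mathlib

section
/- Balanced non-negative monotone games are stable under partial composition: if Γ_A = (A, α) and Γ_B = (B, β) are games on disjoint finite player sets whose coalition functions are non-negative, monotone and balanced, and i ∈ A, then the composite game Γ_A ∘_i Γ_B is also non-negative, monotone and balanced. -/
open Finset

/-- The discrete derivative of a coalition function `v` at player `i`. -/
noncomputable def gameDeriv {ι : Type*} [DecidableEq ι]
    (v : Finset ι → ℝ) (i : ι) (S : Finset ι) : ℝ :=
  v (insert i S) - v (S.erase i)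

/-- The coalition function of the partial composition `Γ_A ∘ᵢ Γ_B`. -/
noncomputable def gameComp {ι : Type*} [DecidableEq ι]
    (A B : Finset ι) (i : ι) (α β : Finset ι → ℝ) (S : Finset ι) : ℝ :=
  β B * α (S ∩ A) + gameDeriv α i (S ∩ A) * β (S ∩ B)

/-- A game `(N, v)` is balanced if for every balanced collection `𝓑` of coalitions
of `N` with weights `l : 𝓑 → (0, 1]` satisfying `Σ_{S ∈ 𝓑} l_S·𝟙^S = 𝟙^N`
(i.e. for every `j ∈ N` the weights of the coalitions containing `j` sum to `1`),
one has `Σ_{S ∈ 𝓑} l_S·v(S) ≤ v(N)`. -/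
def BalancedGame {ι : Type*} [DecidableEq ι] (N : Finset ι) (v : Finset ι → ℝ) : Prop :=
  ∀ (𝓑 : Finset (Finset ι)) (l : Finset ι → ℝ),
    (∀ S ∈ 𝓑, S ⊆ N) →
    (∀ S ∈ 𝓑, 0 < l S ∧ l S ≤ 1) →
    (∀ j ∈ N, ∑ S ∈ 𝓑.filter (fun S => j ∈ S), l S = 1) →
    ∑ S ∈ 𝓑, l S * v S ≤ v N

/-!
Write `b = β B`. Every coalition `S` of the composite game satisfies
`(α ∘ᵢ β)(S) = (b - β(S_B)) α(S_A) + β(S_B) α(S_A ∪ {i})`, with non-negative coefficients.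
Given balanced weights `l` on coalitions of the composite game, the coalitions `S_A` and
`S_A ∪ {i}`, weighted by `l_S (b - β(S_B))` and `l_S β(S_B)`, cover every player of `A ∖ {i}`
with total weight exactly `b`, and cover `i` with total weight `∑ l_S β(S_B)`, which is at most
`b` because `β` is balanced. Filling the deficit at `i` with the singleton `{i}` cannot decrease
the total worth, so balancedness of `α`, scaled by `b`, bounds it by `b α(A)`.
-/

section Sums

variable {κ κ' τ R M : Type*}

theorem sum_image_fiber_sum_mul [DecidableEq τ] [NonUnitalNonAssocSemiring R] (s : Finset κ)
    (f : κ → τ) (w : κ → R) (g : τ → R) :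
    ∑ x ∈ s.image f, (∑ k ∈ s with f k = x, w k) * g x = ∑ k ∈ s, w k * g (f k) := by
  refine sum_image' _ fun k _ => ?_
  rw [sum_mul]
  exact sum_congr rfl fun k' hk' => by rw [(mem_filter.1 hk').2]

theorem sum_filter_disjSum [AddCommMonoid M] (s : Finset κ) (t : Finset κ')
    (p : κ ⊕ κ' → Prop) [DecidablePred p] (F : κ ⊕ κ' → M) :
    ∑ k ∈ s.disjSum t with p k, F k =
      ∑ k ∈ s with p (.inl k), F (.inl k) + ∑ k ∈ t with p (.inr k), F (.inr k) := by
  simp only [sum_filter, sum_disjSum]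

end Sums

section BalancedFamilies

variable {ι κ : Type*} [DecidableEq ι] {N : Finset ι} {v : Finset ι → ℝ}

theorem BalancedGame.sum_mul_le_of_weights_nonneg (hv : BalancedGame N v) (hv0 : v ∅ = 0)
    (𝓑 : Finset (Finset ι)) (l : Finset ι → ℝ) (hsub : ∀ S ∈ 𝓑, S ⊆ N) (hl : ∀ S ∈ 𝓑, 0 ≤ l S)
    (hcover : ∀ j ∈ N, ∑ S ∈ 𝓑 with j ∈ S, l S = 1) :
    ∑ S ∈ 𝓑, l S * v S ≤ v N := by
  have hsum : ∑ S ∈ 𝓑 with S.Nonempty ∧ l S ≠ 0, l S * v S = ∑ S ∈ 𝓑, l S * v S := by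
    refine sum_filter_of_ne fun S _ hne => ⟨?_, left_ne_zero_of_mul hne⟩
    rw [nonempty_iff_ne_empty]
    rintro rfl
    exact right_ne_zero_of_mul hne hv0
  rw [← hsum]
  refine hv _ l (fun S hS => hsub S (mem_filter.1 hS).1) (fun S hS => ?_) (fun j hj => ?_)
  · obtain ⟨hS𝓑, ⟨j, hjS⟩, hlS⟩ := mem_filter.1 hS
    refine ⟨(hl S hS𝓑).lt_of_ne' hlS, ?_⟩
    rw [← hcover j (hsub S hS𝓑 hjS)]
    exact single_le_sum (f := l) (fun T hT => hl T (mem_filter.1 hT).1)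
      (mem_filter.2 ⟨hS𝓑, hjS⟩)
  · rw [← hcover j hj, filter_comm]
    exact sum_filter_of_ne fun S hS hlS => ⟨⟨j, (mem_filter.1 hS).2⟩, hlS⟩

theorem BalancedGame.sum_mul_le_of_cover_eq_one (hv : BalancedGame N v) (hv0 : v ∅ = 0)
    (s : Finset κ) (f : κ → Finset ι) (w : κ → ℝ)
    (hsub : ∀ k ∈ s, f k ⊆ N) (hw : ∀ k ∈ s, 0 ≤ w k)
    (hcover : ∀ j ∈ N, ∑ k ∈ s with j ∈ f k, w k = 1) :
    ∑ k ∈ s, w k * v (f k) ≤ v N := by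
  rw [← sum_image_fiber_sum_mul]
  refine hv.sum_mul_le_of_weights_nonneg hv0 _ _ (forall_mem_image.2 hsub)
    (fun S _ => sum_nonneg fun k hk => hw k (mem_filter.1 hk).1) fun j hj => ?_
  have hfiber := sum_image_fiber_sum_mul s f w fun S => if j ∈ S then 1 else 0
  simp only [mul_ite, mul_one, mul_zero, ← sum_filter] at hfiber
  rw [hfiber, hcover j hj]

theorem BalancedGame.sum_mul_inter_le (hv : BalancedGame N v) (hv0 : v ∅ = 0)
    {𝓑 : Finset (Finset ι)} {l : Finset ι → ℝ} (hl : ∀ S ∈ 𝓑, 0 ≤ l S)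
    (hcover : ∀ j ∈ N, ∑ S ∈ 𝓑 with j ∈ S, l S = 1) :
    ∑ S ∈ 𝓑, l S * v (S ∩ N) ≤ v N := by
  refine hv.sum_mul_le_of_cover_eq_one hv0 𝓑 (· ∩ N) l (fun S _ => inter_subset_right) hl
    fun j hj => ?_
  simp only [mem_inter, hj, and_true, hcover j hj]

theorem BalancedGame.sum_mul_le_of_cover_le_one (hv : BalancedGame N v) (hv0 : v ∅ = 0)
    (hv_singleton : ∀ j ∈ N, 0 ≤ v {j}) (s : Finset κ) (f : κ → Finset ι) (w : κ → ℝ)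
    (hsub : ∀ k ∈ s, f k ⊆ N) (hw : ∀ k ∈ s, 0 ≤ w k)
    (hcover : ∀ j ∈ N, ∑ k ∈ s with j ∈ f k, w k ≤ 1) :
    ∑ k ∈ s, w k * v (f k) ≤ v N := by
  let deficit : ι → ℝ := fun j => 1 - ∑ k ∈ s with j ∈ f k, w k
  have deficit_nonneg : ∀ j ∈ N, 0 ≤ deficit j := fun j hj => sub_nonneg.2 (hcover j hj)
  have hfilled : ∑ k ∈ s, w k * v (f k) + ∑ j ∈ N, deficit j * v {j} ≤ v N := by
    have h := hv.sum_mul_le_of_cover_eq_one hv0 (s.disjSum N) (Sum.elim f singleton)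
      (Sum.elim w deficit) ?_ ?_ ?_
    · simpa only [sum_disjSum, Sum.elim_inl, Sum.elim_inr] using h
    · rintro (k | j) hk
      · exact hsub k (inl_mem_disjSum.1 hk)
      · exact singleton_subset_iff.2 (inr_mem_disjSum.1 hk)
    · rintro (k | j) hk
      · exact hw k (inl_mem_disjSum.1 hk)
      · exact deficit_nonneg j (inr_mem_disjSum.1 hk)
    · intro j hj
      have hsingleton : ∑ k ∈ N with j ∈ ({k} : Finset ι), deficit k = deficit j := by
        simp [sum_filter, hj]
      rw [sum_filter_disjSum]
      exact (congrArg _ hsingleton).trans (add_sub_cancel _ _)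
  have hsingletons : 0 ≤ ∑ j ∈ N, deficit j * v {j} :=
    sum_nonneg fun j hj => mul_nonneg (deficit_nonneg j hj) (hv_singleton j hj)
  linarith

theorem BalancedGame.sum_mul_le_of_cover_le (hv : BalancedGame N v) (hv0 : v ∅ = 0)
    (hv_singleton : ∀ j ∈ N, 0 ≤ v {j}) (s : Finset κ) (f : κ → Finset ι) (w : κ → ℝ) {c : ℝ}
    (hc : 0 ≤ c) (hsub : ∀ k ∈ s, f k ⊆ N) (hw : ∀ k ∈ s, 0 ≤ w k)
    (hcover : ∀ j ∈ N, ∑ k ∈ s with j ∈ f k, w k ≤ c) :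
    ∑ k ∈ s, w k * v (f k) ≤ c * v N := by
  rcases hc.eq_or_lt with rfl | hc
  · rw [zero_mul]
    refine (sum_eq_zero fun k hk => ?_).le
    rcases (f k).eq_empty_or_nonempty with hempty | ⟨j, hj⟩
    · rw [hempty, hv0, mul_zero]
    · have hwk : w k ≤ 0 :=
        (single_le_sum (f := w) (fun k' hk' => hw k' (mem_filter.1 hk').1)
          (mem_filter.2 ⟨hk, hj⟩)).trans (hcover j (hsub k hk hj))
      rw [hwk.antisymm (hw k hk), zero_mul]
  · have hscaled : ∑ k ∈ s, w k / c * v (f k) ≤ v N :=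
      hv.sum_mul_le_of_cover_le_one hv0 hv_singleton s f _ hsub
        (fun k hk => div_nonneg (hw k hk) hc.le)
        fun j hj => by rw [← sum_div]; exact div_le_one_of_le₀ (hcover j hj) hc.le
    simp only [div_mul_eq_mul_div, ← sum_div] at hscaled
    exact (div_le_iff₀' hc).1 hscaled

end BalancedFamilies

section Composition

variable {ι : Type*} [DecidableEq ι] {A B : Finset ι} {α β : Finset ι → ℝ} {i : ι}

theorem notMem_of_subset_erase_union (hiB : i ∉ B) {S : Finset ι} (hS : S ⊆ A.erase i ∪ B) :
    i ∉ S := fun hiS =>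
  (mem_union.1 (hS hiS)).elim (notMem_erase i A) hiB

theorem gameComp_of_notMem {S : Finset ι} (hiS : i ∉ S) :
    gameComp A B i α β S =
      (β B - β (S ∩ B)) * α (S ∩ A) + β (S ∩ B) * α (insert i (S ∩ A)) := by
  have hiSA : i ∉ S ∩ A := fun h => hiS (mem_inter.1 h).1
  rw [gameComp, gameDeriv, erase_eq_of_notMem hiSA]
  ring

theorem gameComp_erase_union (hi : i ∈ A) (hiB : i ∉ B) :
    gameComp A B i α β (A.erase i ∪ B) = β B * α A := by
  have hB : (A.erase i ∪ B) ∩ B = B := inter_eq_right.2 subset_union_right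
  have hA : insert i ((A.erase i ∪ B) ∩ A) = A := by
    rw [← insert_inter_of_mem hi, ← insert_union, insert_erase hi]
    exact inter_eq_right.2 subset_union_left
  rw [gameComp_of_notMem (notMem_of_subset_erase_union hiB subset_rfl), hB, hA]
  ring

theorem gameComp_nonneg (hi : i ∈ A) (hα : ∀ S ⊆ A, 0 ≤ α S) (hβ : ∀ S ⊆ B, 0 ≤ β S)
    (hβ_le : ∀ S ⊆ B, β S ≤ β B) {S : Finset ι} (hiS : i ∉ S) :
    0 ≤ gameComp A B i α β S := by
  rw [gameComp_of_notMem hiS]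
  exact add_nonneg
    (mul_nonneg (sub_nonneg.2 (hβ_le _ inter_subset_right)) (hα _ inter_subset_right))
    (mul_nonneg (hβ _ inter_subset_right) (hα _ (insert_subset hi inter_subset_right)))

theorem gameComp_le_gameComp (hi : i ∈ A) (hα : ∀ S T : Finset ι, S ⊆ T → T ⊆ A → α S ≤ α T)
    (hβ_nonneg : ∀ S ⊆ B, 0 ≤ β S) (hβ : ∀ S T : Finset ι, S ⊆ T → T ⊆ B → β S ≤ β T)
    {S T : Finset ι} (hST : S ⊆ T) (hiT : i ∉ T) :
    gameComp A B i α β S ≤ gameComp A B i α β T := by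
  have hA : S ∩ A ⊆ T ∩ A := inter_subset_inter_right hST
  have hTA : insert i (T ∩ A) ⊆ A := insert_subset hi inter_subset_right
  have hβS : 0 ≤ β (S ∩ B) := hβ_nonneg _ inter_subset_right
  have hβSB : 0 ≤ β B - β (S ∩ B) := sub_nonneg.2 (hβ _ _ inter_subset_right subset_rfl)
  have hβST : 0 ≤ β (T ∩ B) - β (S ∩ B) :=
    sub_nonneg.2 (hβ _ _ (inter_subset_inter_right hST) inter_subset_right)
  have hαi : 0 ≤ α (insert i (T ∩ A)) - α (T ∩ A) :=
    sub_nonneg.2 (hα _ _ (subset_insert _ _) hTA)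
  rw [gameComp_of_notMem fun hiS => hiT (hST hiS), gameComp_of_notMem hiT]
  calc (β B - β (S ∩ B)) * α (S ∩ A) + β (S ∩ B) * α (insert i (S ∩ A))
      ≤ (β B - β (S ∩ B)) * α (T ∩ A) + β (S ∩ B) * α (insert i (T ∩ A)) := by
        gcongr
        · exact hα _ _ hA inter_subset_right
        · exact hα _ _ (insert_subset_insert i hA) hTA
    _ ≤ (β B - β (S ∩ B)) * α (T ∩ A) + β (S ∩ B) * α (insert i (T ∩ A)) +
          (β (T ∩ B) - β (S ∩ B)) * (α (insert i (T ∩ A)) - α (T ∩ A)) :=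
        le_add_of_nonneg_right (mul_nonneg hβST hαi)
    _ = (β B - β (T ∩ B)) * α (T ∩ A) + β (T ∩ B) * α (insert i (T ∩ A)) := by ring

theorem sum_cover_split_le {𝓑 : Finset (Finset ι)} {l t : Finset ι → ℝ} {c : ℝ}
    (hi𝓑 : ∀ S ∈ 𝓑, i ∉ S) (hcover : ∀ j ∈ A.erase i, ∑ S ∈ 𝓑 with j ∈ S, l S = 1)
    (ht : ∑ S ∈ 𝓑, l S * t S ≤ c) {j : ι} (hj : j ∈ A) :
    ∑ S ∈ 𝓑 with j ∈ S ∩ A, l S * (c - t S) +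
      ∑ S ∈ 𝓑 with j ∈ insert i (S ∩ A), l S * t S ≤ c := by
  rcases eq_or_ne j i with rfl | hji
  · have huncovered : ∑ S ∈ 𝓑 with j ∈ S ∩ A, l S * (c - t S) = 0 := by
      rw [filter_false_of_mem fun S hS hjS => hi𝓑 S hS (mem_inter.1 hjS).1, sum_empty]
    simpa only [huncovered, zero_add, mem_insert_self, filter_true] using ht
  · simp only [mem_insert, hji, false_or, mem_inter, hj, and_true]
    rw [← sum_add_distrib]
    simp only [← mul_add, sub_add_cancel]
    rw [← sum_mul, hcover j (mem_erase.2 ⟨hji, hj⟩), one_mul]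

theorem balancedGame_gameComp (hi : i ∈ A) (hiB : i ∉ B) (hα0 : α ∅ = 0) (hβ0 : β ∅ = 0)
    (hα_singleton : ∀ j ∈ A, 0 ≤ α {j}) (hβ_nonneg : ∀ S ⊆ B, 0 ≤ β S)
    (hβ_le : ∀ S ⊆ B, β S ≤ β B)
    (hα : BalancedGame A α) (hβ : BalancedGame B β) :
    BalancedGame (A.erase i ∪ B) (gameComp A B i α β) := by
  intro 𝓑 l hsub hl hcover
  have hl_nonneg : ∀ S ∈ 𝓑, 0 ≤ l S := fun S hS => (hl S hS).1.le
  have hi𝓑 : ∀ S ∈ 𝓑, i ∉ S := fun S hS => notMem_of_subset_erase_union hiB (hsub S hS)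
  have hβ_sum : ∑ S ∈ 𝓑, l S * β (S ∩ B) ≤ β B :=
    hβ.sum_mul_inter_le hβ0 hl_nonneg fun j hj => hcover j (mem_union_right _ hj)
  have hα_sum := hα.sum_mul_le_of_cover_le hα0 hα_singleton (𝓑.disjSum 𝓑)
    (Sum.elim (· ∩ A) fun S => insert i (S ∩ A))
    (Sum.elim (fun S => l S * (β B - β (S ∩ B))) fun S => l S * β (S ∩ B))
    (hβ_nonneg B subset_rfl) ?_ ?_ ?_
  · simp only [sum_disjSum, Sum.elim_inl, Sum.elim_inr] at hα_sum
    rw [gameComp_erase_union hi hiB]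
    refine le_of_eq_of_le ?_ hα_sum
    rw [← sum_add_distrib]
    refine sum_congr rfl fun S hS => ?_
    rw [gameComp_of_notMem (hi𝓑 S hS)]
    ring
  · rintro (S | S) _
    · exact inter_subset_right
    · exact insert_subset hi inter_subset_right
  · rintro (S | S) hS
    · exact mul_nonneg (hl_nonneg S (inl_mem_disjSum.1 hS))
        (sub_nonneg.2 (hβ_le _ inter_subset_right))
    · exact mul_nonneg (hl_nonneg S (inr_mem_disjSum.1 hS)) (hβ_nonneg _ inter_subset_right)
  · intro j hj
    rw [sum_filter_disjSum]
    exact sum_cover_split_le hi𝓑 (fun k hk => hcover k (mem_union_left B hk)) hβ_sum hj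

theorem balanced_gameComp_general (hi : i ∈ A) (hiB : i ∉ B) (hα0 : α ∅ = 0) (hβ0 : β ∅ = 0)
    (hαnn : ∀ S ⊆ A, 0 ≤ α S) (hβnn : ∀ S ⊆ B, 0 ≤ β S)
    (hαm : ∀ S T : Finset ι, S ⊆ T → T ⊆ A → α S ≤ α T)
    (hβm : ∀ S T : Finset ι, S ⊆ T → T ⊆ B → β S ≤ β T)
    (hαb : BalancedGame A α) (hβb : BalancedGame B β) :
    (∀ S ⊆ A.erase i ∪ B, 0 ≤ gameComp A B i α β S) ∧
    (∀ S T : Finset ι, S ⊆ T → T ⊆ A.erase i ∪ B →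
      gameComp A B i α β S ≤ gameComp A B i α β T) ∧
    BalancedGame (A.erase i ∪ B) (gameComp A B i α β) := by
  have hβ_le : ∀ S ⊆ B, β S ≤ β B := fun S hS => hβm S B hS subset_rfl
  refine ⟨fun S hS => ?_, fun S T hST hT => ?_, ?_⟩
  · exact gameComp_nonneg hi hαnn hβnn hβ_le (notMem_of_subset_erase_union hiB hS)
  · exact gameComp_le_gameComp hi hαm hβnn hβm hST (notMem_of_subset_erase_union hiB hT)
  · exact balancedGame_gameComp hi hiB hα0 hβ0
      (fun j hj => hαnn {j} (singleton_subset_iff.2 hj)) hβnn hβ_le hαb hβb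

end Composition

/-- Non-negative monotone balanced games are stable under partial composition. -/
theorem balanced_gameComp {ι : Type*} [DecidableEq ι]
    (A B : Finset ι) (α β : Finset ι → ℝ)
    (hAB : Disjoint A B) (hα0 : α ∅ = 0) (hβ0 : β ∅ = 0)
    (hαnn : ∀ S ⊆ A, 0 ≤ α S) (hβnn : ∀ S ⊆ B, 0 ≤ β S)
    (hαm : ∀ S T : Finset ι, S ⊆ T → T ⊆ A → α S ≤ α T)
    (hβm : ∀ S T : Finset ι, S ⊆ T → T ⊆ B → β S ≤ β T)
    (hαb : BalancedGame A α) (hβb : BalancedGame B β)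
    (i : ι) (hi : i ∈ A) :
    (∀ S ⊆ A.erase i ∪ B, 0 ≤ gameComp A B i α β S) ∧
    (∀ S T : Finset ι, S ⊆ T → T ⊆ A.erase i ∪ B →
      gameComp A B i α β S ≤ gameComp A B i α β T) ∧
    BalancedGame (A.erase i ∪ B) (gameComp A B i α β) :=
  balanced_gameComp_general hi (disjoint_left.1 hAB hi) hα0 hβ0 hαnn hβnn hαm hβm hαb hβb
end

section
/- Let Γ_A = (A, α) and Γ_B = (B, β) be non-negative cooperative games on disjoint finite player sets and let i ∈ A. Then: (1) for every x in the core C(Γ_A) and every y in the core C(Γ_B), the partial tensor product x ⊗_i y lies in the core C(Γ_A ∘_i Γ_B) of the composite game; and (2) if moreover α({i}) > 0 and β(B) > 0, then the map (x, y) ↦ x ⊗_i y from C(Γ_A) × C(Γ_B) to C(Γ_A ∘_i Γ_B) is injective. -/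
open Finset

/-- `x` lies in the core of the game `(N, v)`: `x(N) = v(N)` and `x(S) ≥ v(S)` for
every coalition `S ⊆ N`. -/
def InCore {ι : Type*} (N : Finset ι) (v : Finset ι → ℝ) (x : ι → ℝ) : Prop :=
  (∑ j ∈ N, x j) = v N ∧ ∀ S ⊆ N, v S ≤ ∑ j ∈ S, x j

/-- The partial tensor product of `x ∈ ℝ^A` and `y ∈ ℝ^B` at `i ∈ A`. -/
noncomputable def ptensor {ι : Type*} [DecidableEq ι]
    (B : Finset ι) (i : ι) (x y : ι → ℝ) (j : ι) : ℝ :=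
  if j ∈ B then x i * y j else (∑ l ∈ B, y l) * x j

/-!
For `T ⊆ A ∖ {i}` and `U ⊆ B` the composite worth of `T ∪ U` regroups as
`(β(B) - β(U)) · α(T) + β(U) · α(T ∪ {i})`. Since `0 ≤ β(U) ≤ y(U) ≤ y(B) = β(B)`, both weights are
non-negative, so the core inequalities of `x` at `T` and `T ∪ {i}` bound it by
`β(B) · x(T) + x_i · β(U)`, which is at most `(x ⊗_i y)(T ∪ U)` because `x_i ≥ α({i}) ≥ 0`.

For injectivity, `x ⊗_i y` determines `x` off `i` by dividing by `β(B)`, then `x_i` because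
`x(A) = α(A)` is prescribed, and finally `y` by dividing by `x_i ≥ α({i}) > 0`.
-/

section Core

variable {ι : Type*} {N S : Finset ι} {v : Finset ι → ℝ} {x x' : ι → ℝ} {i j : ι}

theorem InCore.singleton_le (hx : InCore N v x) (hj : j ∈ N) : v {j} ≤ x j := by
  simpa only [sum_singleton] using hx.2 {j} (singleton_subset_iff.mpr hj)

theorem InCore.sum_le_of_subset (hx : InCore N v x) (hv : ∀ j ∈ N, 0 ≤ v {j}) (hS : S ⊆ N) :
    ∑ j ∈ S, x j ≤ v N :=
  calc
    ∑ j ∈ S, x j ≤ ∑ j ∈ N, x j :=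
      sum_le_sum_of_subset_of_nonneg hS fun j hj _ => (hv j hj).trans (hx.singleton_le hj)
    _ = v N := hx.1

theorem InCore.eq_of_eq_on_erase [DecidableEq ι] (hx : InCore N v x) (hx' : InCore N v x')
    (h : ∀ j ∈ N.erase i, x j = x' j) : ∀ j ∈ N, x j = x' j := by
  intro j hj
  by_cases hji : j = i
  · subst hji
    have hsum : x j + ∑ k ∈ N.erase j, x k = x' j + ∑ k ∈ N.erase j, x' k := by
      rw [add_sum_erase N x hj, add_sum_erase N x' hj, hx.1, hx'.1]
    rwa [sum_congr rfl h, add_left_inj] at hsum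
  · exact h j (mem_erase.mpr ⟨hji, hj⟩)

end Core

section Composition

variable {ι : Type*} [DecidableEq ι] {A B T U : Finset ι} {α β : Finset ι → ℝ} {i j : ι}
  {x y x' y' : ι → ℝ}

theorem ptensor_of_mem (hj : j ∈ B) : ptensor B i x y j = x i * y j :=
  if_pos hj

theorem ptensor_of_notMem (hj : j ∉ B) : ptensor B i x y j = (∑ l ∈ B, y l) * x j :=
  if_neg hj

theorem sum_ptensor_union (hT : Disjoint T B) (hU : U ⊆ B) :
    ∑ j ∈ T ∪ U, ptensor B i x y j = (∑ l ∈ B, y l) * ∑ j ∈ T, x j + x i * ∑ j ∈ U, y j := by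
  rw [sum_union (hT.mono_right hU), mul_sum, mul_sum]
  congr 1
  · exact sum_congr rfl fun j hj => ptensor_of_notMem (disjoint_left.mp hT hj)
  · exact sum_congr rfl fun j hj => ptensor_of_mem (hU hj)

theorem gameComp_union (hAB : Disjoint A B) (hT : T ⊆ A) (hiT : i ∉ T) (hU : U ⊆ B) :
    gameComp A B i α β (T ∪ U) = (β B - β U) * α T + β U * α (insert i T) := by
  have inter_left : (T ∪ U) ∩ A = T := by
    rw [union_inter_distrib_right, inter_eq_left.mpr hT,
      disjoint_iff_inter_eq_empty.mp (hAB.symm.mono_left hU), union_empty]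
  have inter_right : (T ∪ U) ∩ B = U := by
    rw [union_inter_distrib_right, inter_eq_left.mpr hU,
      disjoint_iff_inter_eq_empty.mp (hAB.mono_left hT), empty_union]
  rw [gameComp, gameDeriv, inter_left, inter_right, erase_eq_of_notMem hiT]
  ring

theorem sum_ptensor_eq_gameComp (hAB : Disjoint A B) (hi : i ∈ A)
    (hx : InCore A α x) (hy : InCore B β y) :
    ∑ j ∈ A.erase i ∪ B, ptensor B i x y j = gameComp A B i α β (A.erase i ∪ B) := by
  have hA : A.erase i ⊆ A := erase_subset i A
  rw [sum_ptensor_union (hAB.mono_left hA) Subset.rfl,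
    gameComp_union hAB hA (notMem_erase i A) Subset.rfl, insert_erase hi, hy.1, ← hx.1,
    ← add_sum_erase A x hi]
  ring

theorem gameComp_union_le_sum_ptensor (hAB : Disjoint A B) (hi : i ∈ A) (hαi : 0 ≤ α {i})
    (hβ : ∀ S ⊆ B, 0 ≤ β S) (hx : InCore A α x) (hy : InCore B β y)
    (hT : T ⊆ A) (hiT : i ∉ T) (hU : U ⊆ B) :
    gameComp A B i α β (T ∪ U) ≤ ∑ j ∈ T ∪ U, ptensor B i x y j := by
  have hxT : α T ≤ ∑ j ∈ T, x j := hx.2 T hT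
  have hxiT : α (insert i T) ≤ x i + ∑ j ∈ T, x j := by
    rw [← sum_insert hiT]
    exact hx.2 (insert i T) (insert_subset hi hT)
  have hyU : β U ≤ ∑ j ∈ U, y j := hy.2 U hU
  have hβU : 0 ≤ β U := hβ U hU
  have hβUB : 0 ≤ β B - β U := sub_nonneg.mpr <| hyU.trans <|
    hy.sum_le_of_subset (fun j hj => hβ {j} (singleton_subset_iff.mpr hj)) hU
  have hxi : 0 ≤ x i := hαi.trans (hx.singleton_le hi)
  calc
    gameComp A B i α β (T ∪ U) = (β B - β U) * α T + β U * α (insert i T) :=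
      gameComp_union hAB hT hiT hU
    _ ≤ (β B - β U) * ∑ j ∈ T, x j + β U * (x i + ∑ j ∈ T, x j) := by gcongr
    _ = β B * ∑ j ∈ T, x j + x i * β U := by ring
    _ ≤ β B * ∑ j ∈ T, x j + x i * ∑ j ∈ U, y j := by gcongr
    _ = ∑ j ∈ T ∪ U, ptensor B i x y j := by
      rw [sum_ptensor_union (hAB.mono_left hT) hU, hy.1]

theorem inCore_gameComp_ptensor (hAB : Disjoint A B) (hi : i ∈ A) (hαi : 0 ≤ α {i})
    (hβ : ∀ S ⊆ B, 0 ≤ β S) (hx : InCore A α x) (hy : InCore B β y) :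
    InCore (A.erase i ∪ B) (gameComp A B i α β) (ptensor B i x y) := by
  refine ⟨sum_ptensor_eq_gameComp hAB hi hx hy, fun S hS => ?_⟩
  have hS_split : S = S ∩ A.erase i ∪ S ∩ B := by
    rw [← inter_union_distrib_left, inter_eq_left.mpr hS]
  have hT : S ∩ A.erase i ⊆ A.erase i := inter_subset_right
  rw [hS_split]
  exact gameComp_union_le_sum_ptensor hAB hi hαi hβ hx hy (hT.trans (erase_subset i A))
    (fun hiT => notMem_erase i A (hT hiT)) inter_subset_right

theorem eq_left_of_ptensor_eq (hAB : Disjoint A B) (hβB : β B ≠ 0)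
    (hx : InCore A α x) (hy : InCore B β y) (hx' : InCore A α x') (hy' : InCore B β y')
    (h : ∀ j ∈ A.erase i, ptensor B i x y j = ptensor B i x' y' j) :
    ∀ j ∈ A, x j = x' j := by
  refine hx.eq_of_eq_on_erase hx' (i := i) fun j hj => mul_left_cancel₀ hβB ?_
  have hjB : j ∉ B := disjoint_left.mp hAB (mem_of_mem_erase hj)
  simpa only [ptensor_of_notMem hjB, hy.1, hy'.1] using h j hj

theorem eq_right_of_ptensor_eq (hxi : x i ≠ 0) (hxx' : x i = x' i)
    (h : ∀ j ∈ B, ptensor B i x y j = ptensor B i x' y' j) : ∀ j ∈ B, y j = y' j := by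
  refine fun j hj => mul_left_cancel₀ hxi ?_
  simpa only [ptensor_of_mem hj, ← hxx'] using h j hj

theorem ptensor_injOn_core (hAB : Disjoint A B) (hi : i ∈ A) (hαi : 0 < α {i}) (hβB : β B ≠ 0)
    (hx : InCore A α x) (hy : InCore B β y) (hx' : InCore A α x') (hy' : InCore B β y')
    (h : ∀ j ∈ A.erase i ∪ B, ptensor B i x y j = ptensor B i x' y' j) :
    (∀ j ∈ A, x j = x' j) ∧ ∀ j ∈ B, y j = y' j := by
  have hxx' : ∀ j ∈ A, x j = x' j :=
    eq_left_of_ptensor_eq hAB hβB hx hy hx' hy' fun j hj => h j (mem_union_left B hj)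
  have hxi : x i ≠ 0 := (hαi.trans_le (hx.singleton_le hi)).ne'
  exact ⟨hxx', eq_right_of_ptensor_eq hxi (hxx' i hi) fun j hj => h j (mem_union_right _ hj)⟩

theorem core_ptensor_general (hAB : Disjoint A B) (hi : i ∈ A) (hαi : 0 ≤ α {i})
    (hβ : ∀ S ⊆ B, 0 ≤ β S) :
    (∀ x y : ι → ℝ, InCore A α x → InCore B β y →
      InCore (A.erase i ∪ B) (gameComp A B i α β) (ptensor B i x y)) ∧
    (0 < α {i} → 0 < β B →
      ∀ x y x' y' : ι → ℝ,
        InCore A α x → InCore B β y → InCore A α x' → InCore B β y' →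
        (∀ j ∈ A.erase i ∪ B, ptensor B i x y j = ptensor B i x' y' j) →
        (∀ j ∈ A, x j = x' j) ∧ (∀ j ∈ B, y j = y' j)) :=
  ⟨fun _ _ => inCore_gameComp_ptensor hAB hi hαi hβ,
    fun hαi_pos hβB _ _ _ _ => ptensor_injOn_core hAB hi hαi_pos hβB.ne'⟩

end Composition

/-- (1) The partial tensor product of core elements of the components lies in the
core of the composite game; (2) if `α({i}) > 0` and `β(B) > 0`, the induced map
`C(Γ_A) × C(Γ_B) → C(Γ_A ∘ᵢ Γ_B)` is injective. -/
theorem core_ptensor {ι : Type*} [DecidableEq ι]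
    (A B : Finset ι) (α β : Finset ι → ℝ)
    (hAB : Disjoint A B) (hα0 : α ∅ = 0) (hβ0 : β ∅ = 0)
    (hαnn : ∀ S ⊆ A, 0 ≤ α S) (hβnn : ∀ S ⊆ B, 0 ≤ β S)
    (i : ι) (hi : i ∈ A) :
    (∀ x y : ι → ℝ, InCore A α x → InCore B β y →
      InCore (A.erase i ∪ B) (gameComp A B i α β) (ptensor B i x y)) ∧
    (0 < α {i} → 0 < β B →
      ∀ x y x' y' : ι → ℝ,
        InCore A α x → InCore B β y → InCore A α x' → InCore B β y' →
        (∀ j ∈ A.erase i ∪ B, ptensor B i x y j = ptensor B i x' y' j) →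
        (∀ j ∈ A, x j = x' j) ∧ (∀ j ∈ B, y j = y' j)) := by
  exact core_ptensor_general hAB hi (hαnn {i} (singleton_subset_iff.mpr hi)) hβnn
end
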